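/- Let α, β ≥ -1/2. There exists a constant C depending only on α and β such that for all θ, φ ∈ (0,π) with θ ≠ φ one has sup_{t>0} H̃_t^{α,β}(θ,φ) ≤ C / μ_{α,β}^+(B(θ, |θ-φ|)). -/

import Mathlib

open MeasureTheory Real Set

noncomputable section

/-- The Jacobi measure `μ_{α,β}^+` on `(0,π)`: density
`(sin(θ/2))^(2α+1) (cos(θ/2))^(2β+1)` w.r.t. Lebesgue measure on `(0,π)`. -/
def jacobiMeasure (α β : ℝ) : Measure ℝ :=
  (volume.restrict (Ioo 0 π)).withDensity
    (fun θ => ENNReal.ofReal (Real.sin (θ / 2) ^ (2 * α + 1) * Real.cos (θ / 2) ^ (2 * β + 1)))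

/-- The ball `B(θ,r) = (θ-r, θ+r) ∩ (0,π)`. -/
def jacobiBall (θ r : ℝ) : Set ℝ := Ioo (θ - r) (θ + r) ∩ Ioo 0 π

/-- The measure `Π_α` on `[-1,1]`. -/
def PiMeasure (α : ℝ) : Measure ℝ :=
  if α = -(1 / 2) then (2 : ENNReal)⁻¹ • (Measure.dirac (-1) + Measure.dirac 1)
  else
    (volume.restrict (Icc (-1) 1)).withDensity
      (fun u => ENNReal.ofReal
        (Real.Gamma (α + 1) / (Real.sqrt π * Real.Gamma (α + 1 / 2)) * (1 - u ^ 2) ^ (α - 1 / 2)))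

/-- `q(θ,φ,u,v) = 1 - u sin(θ/2) sin(φ/2) - v cos(θ/2) cos(φ/2)`. -/
def qfun (θ φ u v : ℝ) : ℝ :=
  1 - u * Real.sin (θ / 2) * Real.sin (φ / 2) - v * Real.cos (θ / 2) * Real.cos (φ / 2)

/-- `Ψ^{α,β}(t,s) = sinh(t/2) / (cosh(t/2) - 1 + s)^(α+β+2)`. -/
def Psi (α β t s : ℝ) : ℝ :=
  Real.sinh (t / 2) / (Real.cosh (t / 2) - 1 + s) ^ (α + β + 2)

/-- The Jacobi-Poisson kernel `H_t^{α,β}(θ,φ)`. -/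
def Hker (α β t θ φ : ℝ) : ℝ :=
  ((2 : ℝ) ^ (-(α + β + 2)) / (jacobiMeasure α β (Ioo 0 π)).toReal) * Real.sinh (t / 2) *
    ∫ u, ∫ v, 1 / (Real.cosh (t / 2) - 1 + qfun θ φ u v) ^ (α + β + 2)
      ∂(PiMeasure β) ∂(PiMeasure α)

/-- The symmetrized kernel `H̃_t^{α,β}(θ,φ) = (1/4) sin θ sin φ H_t^{α+1,β+1}(θ,φ)`. -/
def Htilde (α β t θ φ : ℝ) : ℝ :=
  (1 / 4) * Real.sin θ * Real.sin φ * Hker (α + 1) (β + 1) t θ φ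

end

/-- One-dimensional estimate. -/
theorem pi_one_dim (α : ℝ) (hα : -(1 / 2) ≤ α) :
    ∃ C : ℝ, 0 ≤ C ∧ ∀ a D : ℝ, 0 < a → 0 < D →
      Integrable (fun u => (D + a * (1 - u)) ^ (-(α + 2))) (PiMeasure (α + 1)) ∧
      a * ∫ u, (D + a * (1 - u)) ^ (-(α + 2)) ∂(PiMeasure (α + 1))
        ≤ C * ((a + D) ^ (-(α + 1 / 2)) * D ^ (-(1 / 2 : ℝ))) := by
  have hne : α + 1 ≠ -(1 / 2) := by linarith
  set k : ℝ := Real.Gamma (α + 1 + 1) / (Real.sqrt π * Real.Gamma (α + 1 + 1 / 2)) with hk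
  have hk0 : 0 ≤ k := by
    have h1 : 0 < Real.Gamma (α + 1 + 1) := Real.Gamma_pos_of_pos (by linarith)
    have h2 : 0 < Real.Gamma (α + 1 + 1 / 2) := Real.Gamma_pos_of_pos (by linarith)
    positivity
  have hp : 0 ≤ α + 1 / 2 := by linarith
  refine ⟨k * 4 ^ (α + 1 / 2) * 2, by positivity, ?_⟩
  intro a D ha hD
  have hPi : PiMeasure (α + 1) = (volume.restrict (Icc (-1) 1)).withDensity
      (fun u => ENNReal.ofReal (k * (1 - u ^ 2) ^ (α + 1 / 2))) := by
    unfold PiMeasure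
    rw [if_neg hne]
    have : α + 1 - 1 / 2 = α + 1 / 2 := by ring
    rw [this]
  have hdm : Measurable (fun u : ℝ => ENNReal.ofReal (k * (1 - u ^ 2) ^ (α + 1 / 2))) := by
    fun_prop
  have hcd : Continuous (fun u : ℝ => k * (1 - u ^ 2) ^ (α + 1 / 2)) := by
    refine continuous_const.mul (Continuous.rpow_const (by fun_prop) (fun x => Or.inr hp))
  have hpos : ∀ u ∈ Icc (-1 : ℝ) 1, 0 < D + a * (1 - u) := by
    intro u hu
    have := mul_nonneg ha.le (sub_nonneg.2 hu.2)
    linarith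
  have hdn : ∀ u ∈ Icc (-1 : ℝ) 1, 0 ≤ k * (1 - u ^ 2) ^ (α + 1 / 2) := by
    intro u hu
    have : 0 ≤ 1 - u ^ 2 := by nlinarith [hu.1, hu.2]
    positivity
  have hcF : ∀ e : ℝ, ContinuousOn (fun u : ℝ => (D + a * (1 - u)) ^ e) (Icc (-1) 1) := by
    intro e
    refine ContinuousOn.rpow_const (by fun_prop) (fun x hx => Or.inl (hpos x hx).ne')
  have hlt : ∀ᵐ u ∂(volume.restrict (Icc (-1 : ℝ) 1)),
      ENNReal.ofReal (k * (1 - u ^ 2) ^ (α + 1 / 2)) < ⊤ :=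
    Filter.Eventually.of_forall (fun u => ENNReal.ofReal_lt_top)
  have hcong : (fun u : ℝ => (ENNReal.ofReal (k * (1 - u ^ 2) ^ (α + 1 / 2))).toReal •
        (D + a * (1 - u)) ^ (-(α + 2))) =ᵐ[volume.restrict (Icc (-1 : ℝ) 1)]
      (fun u : ℝ => (k * (1 - u ^ 2) ^ (α + 1 / 2)) * (D + a * (1 - u)) ^ (-(α + 2))) := by
    filter_upwards [ae_restrict_mem measurableSet_Icc] with u hu
    rw [ENNReal.toReal_ofReal (hdn u hu), smul_eq_mul]
  have hint : Integrable (fun u : ℝ => (k * (1 - u ^ 2) ^ (α + 1 / 2)) *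
      (D + a * (1 - u)) ^ (-(α + 2))) (volume.restrict (Icc (-1 : ℝ) 1)) :=
    (hcd.continuousOn.mul (hcF _)).integrableOn_Icc
  constructor
  · rw [hPi, integrable_withDensity_iff_integrable_smul' hdm hlt]
    exact hint.congr hcong.symm
  · rw [hPi, integral_withDensity_eq_integral_toReal_smul hdm hlt, integral_congr_ae hcong]
    have hb : ∀ u ∈ Icc (-1 : ℝ) 1,
        (k * (1 - u ^ 2) ^ (α + 1 / 2)) * (D + a * (1 - u)) ^ (-(α + 2)) ≤
        (k * 4 ^ (α + 1 / 2) * (a + D) ^ (-(α + 1 / 2))) * (D + a * (1 - u)) ^ (-(3 / 2) : ℝ) := by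
      intro u hu
      have hE := hpos u hu
      have hs : 0 ≤ 1 - u ^ 2 := by nlinarith [hu.1, hu.2]
      have e1 : (D + a * (1 - u)) ^ (-(α + 2)) =
          (D + a * (1 - u)) ^ (-(α + 1 / 2)) * (D + a * (1 - u)) ^ (-(3 / 2) : ℝ) := by
        rw [← Real.rpow_add hE]; congr 1; ring
      rw [e1, ← mul_assoc]
      refine mul_le_mul_of_nonneg_right ?_ (by positivity)
      rw [mul_assoc, mul_assoc]
      refine mul_le_mul_of_nonneg_left ?_ hk0
      have haD : 0 < a + D := by linarith
      rw [Real.rpow_neg hE.le, Real.rpow_neg haD.le, ← div_eq_mul_inv, ← div_eq_mul_inv,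
        ← Real.div_rpow hs hE.le, ← Real.div_rpow (by norm_num) haD.le]
      refine Real.rpow_le_rpow (by positivity) ?_ hp
      rw [div_le_div_iff₀ hE haD]
      have h1 : 1 - u ^ 2 ≤ 2 * (1 - u) := by nlinarith [hu.1, hu.2]
      have h2 : (1 - u ^ 2) * (a + D) ≤ 2 * (1 - u) * (a + D) :=
        mul_le_mul_of_nonneg_right h1 haD.le
      nlinarith [hu.1, hu.2, mul_nonneg ha.le (sub_nonneg.2 hu.2),
        mul_nonneg hD.le (by linarith [hu.1] : (0 : ℝ) ≤ u + 1)]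
    have h1 : ∫ u in Icc (-1 : ℝ) 1, (k * (1 - u ^ 2) ^ (α + 1 / 2)) *
          (D + a * (1 - u)) ^ (-(α + 2)) ≤
        ∫ u in Icc (-1 : ℝ) 1, (k * 4 ^ (α + 1 / 2) * (a + D) ^ (-(α + 1 / 2))) *
          (D + a * (1 - u)) ^ (-(3 / 2) : ℝ) := by
      refine setIntegral_mono_on hint ?_ measurableSet_Icc hb
      exact (continuousOn_const.mul (hcF _)).integrableOn_Icc
    have h2 : a * ∫ u in Icc (-1 : ℝ) 1, (D + a * (1 - u)) ^ (-(3 / 2) : ℝ)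
        ≤ 2 * D ^ (-(1 / 2 : ℝ)) := by
      rw [integral_Icc_eq_integral_Ioc, ← intervalIntegral.integral_of_le (by norm_num)]
      have hd : ∀ u ∈ uIcc (-1 : ℝ) 1,
          HasDerivAt (fun u : ℝ => (2 / a) * (D + a * (1 - u)) ^ (-(1 / 2) : ℝ))
            ((D + a * (1 - u)) ^ (-(3 / 2) : ℝ)) u := by
        intro u hu
        rw [uIcc_of_le (by norm_num)] at hu
        have hE := hpos u hu
        have hl : HasDerivAt (fun u : ℝ => D + a * (1 - u)) (-a) u := by
          have := (((hasDerivAt_id u).const_sub 1).const_mul a).const_add D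
          simpa using this
        have := (hl.rpow_const (p := (-(1 / 2) : ℝ)) (Or.inl hE.ne')).const_mul (2 / a)
        refine this.congr_deriv ?_
        have e : (-(1 / 2) - 1 : ℝ) = -(3 / 2) := by norm_num
        rw [e]
        field_simp
      rw [intervalIntegral.integral_eq_sub_of_hasDerivAt hd]
      · have : 0 ≤ (D + a * (1 - (-1))) ^ (-(1 / 2) : ℝ) := by positivity
        have e : D + a * (1 - 1) = D := by ring
        rw [e, mul_sub, ← mul_assoc, ← mul_assoc]
        have e2 : a * (2 / a) = 2 := by field_simp
        rw [e2]
        linarith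
      · apply ContinuousOn.intervalIntegrable
        rw [uIcc_of_le (by norm_num)]
        exact hcF _
    rw [integral_const_mul] at h1
    have haD : 0 < a + D := by linarith
    calc _ ≤ a * (k * 4 ^ (α + 1 / 2) * (a + D) ^ (-(α + 1 / 2)) *
          ∫ u in Icc (-1 : ℝ) 1, (D + a * (1 - u)) ^ (-(3 / 2) : ℝ)) :=
          mul_le_mul_of_nonneg_left h1 ha.le
      _ = (k * 4 ^ (α + 1 / 2) * (a + D) ^ (-(α + 1 / 2))) *
          (a * ∫ u in Icc (-1 : ℝ) 1, (D + a * (1 - u)) ^ (-(3 / 2) : ℝ)) := by ring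
      _ ≤ (k * 4 ^ (α + 1 / 2) * (a + D) ^ (-(α + 1 / 2))) * (2 * D ^ (-(1 / 2 : ℝ))) :=
          mul_le_mul_of_nonneg_left h2 (by positivity)
      _ = _ := by ring

theorem PiMeasure_ae_mem (α : ℝ) (hα : -(1 / 2) ≤ α) :
    ∀ᵐ u ∂(PiMeasure (α + 1)), u ∈ Icc (-1 : ℝ) 1 := by
  have hne : α + 1 ≠ -(1 / 2) := by linarith
  unfold PiMeasure
  rw [if_neg hne]
  exact (withDensity_absolutelyContinuous _ _).ae_le (ae_restrict_mem measurableSet_Icc)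

/-- Two-dimensional estimate. -/
theorem pi_two_dim (α β : ℝ) (hα : -(1 / 2) ≤ α) (hβ : -(1 / 2) ≤ β) :
    ∃ C : ℝ, 0 ≤ C ∧ ∀ a b D : ℝ, 0 < a → 0 < b → 0 < D →
      a * b * ∫ u, ∫ v, 1 / (D + a * (1 - u) + b * (1 - v)) ^ (α + β + 4)
        ∂(PiMeasure (β + 1)) ∂(PiMeasure (α + 1))
        ≤ C * ((a + D) ^ (-(α + 1 / 2)) * (b + D) ^ (-(β + 1 / 2)) * D⁻¹) := by
  obtain ⟨C1, hC1, H1⟩ := pi_one_dim α hα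
  obtain ⟨C2, hC2, H2⟩ := pi_one_dim β hβ
  refine ⟨C1 * C2, by positivity, ?_⟩
  intro a b D ha hb hD
  obtain ⟨i1, h1⟩ := H1 a D ha hD
  obtain ⟨i2, h2⟩ := H2 b D hb hD
  have key : ∀ u ∈ Icc (-1 : ℝ) 1, ∀ v ∈ Icc (-1 : ℝ) 1,
      0 ≤ 1 / (D + a * (1 - u) + b * (1 - v)) ^ (α + β + 4) ∧
      1 / (D + a * (1 - u) + b * (1 - v)) ^ (α + β + 4) ≤
        (D + a * (1 - u)) ^ (-(α + 2)) * (D + b * (1 - v)) ^ (-(β + 2)) := by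
    intro u hu v hv
    have hu' := mul_nonneg ha.le (sub_nonneg.2 hu.2)
    have hv' := mul_nonneg hb.le (sub_nonneg.2 hv.2)
    have p1 : 0 < D + a * (1 - u) := by linarith
    have p2 : 0 < D + b * (1 - v) := by linarith
    have p3 : 0 < D + a * (1 - u) + b * (1 - v) := by linarith
    refine ⟨by positivity, ?_⟩
    have e : 1 / (D + a * (1 - u) + b * (1 - v)) ^ (α + β + 4) =
        (D + a * (1 - u) + b * (1 - v)) ^ (-(α + 2)) *
        (D + a * (1 - u) + b * (1 - v)) ^ (-(β + 2)) := by
      rw [← Real.rpow_add p3, one_div, ← Real.rpow_neg p3.le]; congr 1; ring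
    rw [e]
    refine mul_le_mul ?_ ?_ (by positivity) (by positivity)
    · exact Real.rpow_le_rpow_of_nonpos p1 (by linarith) (by linarith)
    · exact Real.rpow_le_rpow_of_nonpos p2 (by linarith) (by linarith)
  have hA := PiMeasure_ae_mem α hα
  have hB := PiMeasure_ae_mem β hβ
  set I1 := ∫ u, (D + a * (1 - u)) ^ (-(α + 2)) ∂(PiMeasure (α + 1)) with hI1
  set I2 := ∫ u, (D + b * (1 - u)) ^ (-(β + 2)) ∂(PiMeasure (β + 1)) with hI2
  have hI1n : 0 ≤ I1 := by
    refine integral_nonneg_of_ae ?_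
    filter_upwards [hA] with u hu
    have hu' := mul_nonneg ha.le (sub_nonneg.2 hu.2)
    have p1 : 0 < D + a * (1 - u) := by linarith
    simp only [Pi.zero_apply]
    positivity
  have hI2n : 0 ≤ I2 := by
    refine integral_nonneg_of_ae ?_
    filter_upwards [hB] with u hu
    have hu' := mul_nonneg hb.le (sub_nonneg.2 hu.2)
    have p1 : 0 < D + b * (1 - u) := by linarith
    simp only [Pi.zero_apply]
    positivity
  have hI : ∫ u, ∫ v, 1 / (D + a * (1 - u) + b * (1 - v)) ^ (α + β + 4)
        ∂(PiMeasure (β + 1)) ∂(PiMeasure (α + 1)) ≤ I1 * I2 := by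
    rw [hI1, ← integral_mul_const]
    refine integral_mono_of_nonneg ?_ (i1.mul_const _) ?_
    · filter_upwards [hA] with u hu
      refine integral_nonneg_of_ae ?_
      filter_upwards [hB] with v hv
      exact (key u hu v hv).1
    · filter_upwards [hA] with u hu
      rw [hI2]
      rw [← integral_const_mul]
      refine integral_mono_of_nonneg ?_ (i2.const_mul _) ?_
      · filter_upwards [hB] with v hv
        exact (key u hu v hv).1
      · filter_upwards [hB] with v hv
        exact (key u hu v hv).2
  have haD : 0 < a + D := by linarith
  have hbD : 0 < b + D := by linarith
  have eD : D⁻¹ = D ^ (-(1 / 2 : ℝ)) * D ^ (-(1 / 2 : ℝ)) := by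
    rw [← Real.rpow_add hD, ← Real.rpow_neg_one]; congr 1; norm_num
  calc _ ≤ a * b * (I1 * I2) := mul_le_mul_of_nonneg_left hI (by positivity)
    _ = (a * I1) * (b * I2) := by ring
    _ ≤ (C1 * ((a + D) ^ (-(α + 1 / 2)) * D ^ (-(1 / 2 : ℝ)))) *
        (C2 * ((b + D) ^ (-(β + 1 / 2)) * D ^ (-(1 / 2 : ℝ)))) :=
        mul_le_mul h1 h2 (by positivity) (by positivity)
    _ = _ := by rw [eD]; ring

theorem sinh_bound (t δ : ℝ) (ht : 0 < t) (hδ : 0 < δ) (hδ1 : δ ≤ 1) :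
    Real.sinh (t / 2) * (Real.cosh (t / 2) - 1 + δ)⁻¹ ≤ 2 * δ ^ (-(1 / 2) : ℝ) := by
  have hT : 1 ≤ Real.cosh (t / 2) := Real.one_le_cosh _
  have hS : 0 ≤ Real.sinh (t / 2) := Real.sinh_nonneg_iff.2 (by linarith)
  have hcs := Real.cosh_sq (t / 2)
  generalize Real.cosh (t / 2) = c at *
  generalize Real.sinh (t / 2) = s at *
  rw [Real.rpow_neg hδ.le, ← Real.sqrt_eq_rpow, ← div_eq_mul_inv, ← div_eq_mul_inv,
    div_le_div_iff₀ (by linarith) (Real.sqrt_pos.2 hδ)]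
  have hq := Real.sq_sqrt hδ.le
  have hq0 := Real.sqrt_nonneg δ
  refine le_of_sq_le_sq ?_ (by linarith)
  rw [mul_pow, hq]
  obtain ⟨T, rfl⟩ : ∃ T, c = T + 1 := ⟨c - 1, by ring⟩
  have hT0 : 0 ≤ T := by linarith
  have : s ^ 2 = T ^ 2 + 2 * T := by nlinarith
  rw [this]
  nlinarith [mul_nonneg hT0 hδ.le, mul_le_mul_of_nonneg_left hδ1 (sq_nonneg T), sq_nonneg δ]

theorem ball_measure_le (α β θ r : ℝ) (hα : -(1 / 2) ≤ α) (hβ : -(1 / 2) ≤ β)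
    (hθ : θ ∈ Ioo (0 : ℝ) π) (hr : 0 < r) :
    jacobiMeasure α β (jacobiBall θ r) ≤ ENNReal.ofReal
      (((Real.sin (θ / 2) + r) ^ (2 * α + 1) * (Real.cos (θ / 2) + r) ^ (2 * β + 1)) * (2 * r)) := by
  have hm : MeasurableSet (jacobiBall θ r) := measurableSet_Ioo.inter measurableSet_Ioo
  have hs : 0 < Real.sin (θ / 2) := Real.sin_pos_of_pos_of_lt_pi (by linarith [hθ.1]) (by linarith [hθ.1, hθ.2])
  have hc : 0 < Real.cos (θ / 2) := Real.cos_pos_of_mem_Ioo ⟨by linarith [hθ.1, Real.pi_pos], by linarith [hθ.2]⟩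
  unfold jacobiMeasure
  rw [withDensity_apply _ hm]
  set M := (Real.sin (θ / 2) + r) ^ (2 * α + 1) * (Real.cos (θ / 2) + r) ^ (2 * β + 1) with hM
  have hM0 : 0 ≤ M := by positivity
  calc _ ≤ ∫⁻ _ in jacobiBall θ r, ENNReal.ofReal M ∂(volume.restrict (Ioo 0 π)) := by
        refine setLIntegral_mono' hm ?_
        intro ψ hψ
        refine ENNReal.ofReal_le_ofReal ?_
        obtain ⟨⟨h1, h2⟩, h3, h4⟩ := hψ
        have s0 : 0 < Real.sin (ψ / 2) :=
          Real.sin_pos_of_pos_of_lt_pi (by linarith) (by linarith)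
        have c0 : 0 < Real.cos (ψ / 2) :=
          Real.cos_pos_of_mem_Ioo ⟨by linarith, by linarith⟩
        have habs : |ψ / 2 - θ / 2| ≤ r := by rw [abs_le]; constructor <;> linarith
        have l1 := abs_le.1 ((Real.abs_sin_sub_sin_le (ψ / 2) (θ / 2)).trans habs)
        have l2 := abs_le.1 ((Real.abs_cos_sub_cos_le (ψ / 2) (θ / 2)).trans habs)
        refine mul_le_mul ?_ ?_ (by positivity) (by positivity)
        · exact Real.rpow_le_rpow s0.le (by linarith [l1.2]) (by linarith)
        · exact Real.rpow_le_rpow c0.le (by linarith [l2.2]) (by linarith)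
    _ = ENNReal.ofReal M * (volume.restrict (Ioo 0 π)) (jacobiBall θ r) := by
        rw [setLIntegral_const]
    _ ≤ ENNReal.ofReal M * ENNReal.ofReal (2 * r) := by
        gcongr
        calc _ ≤ volume (jacobiBall θ r) := Measure.restrict_apply_le _ _
          _ ≤ volume (Ioo (θ - r) (θ + r)) := measure_mono inter_subset_left
          _ = _ := by rw [Real.volume_Ioo]; congr 1; ring
    _ = _ := by rw [ENNReal.ofReal_mul hM0]

theorem ball_measure_pos (α β θ r : ℝ) (hθ : θ ∈ Ioo (0 : ℝ) π) (hr : 0 < r) :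
    jacobiMeasure α β (jacobiBall θ r) ≠ 0 := by
  have hm : MeasurableSet (jacobiBall θ r) := measurableSet_Ioo.inter measurableSet_Ioo
  unfold jacobiMeasure
  have hd : Measurable (fun θ : ℝ => ENNReal.ofReal
      (Real.sin (θ / 2) ^ (2 * α + 1) * Real.cos (θ / 2) ^ (2 * β + 1))) := by fun_prop
  rw [Ne, withDensity_apply_eq_zero' hd.aemeasurable]
  have hsub : jacobiBall θ r ⊆ {x | ENNReal.ofReal
      (Real.sin (x / 2) ^ (2 * α + 1) * Real.cos (x / 2) ^ (2 * β + 1)) ≠ 0} ∩ jacobiBall θ r := by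
    intro ψ hψ
    refine ⟨?_, hψ⟩
    obtain ⟨⟨h1, h2⟩, h3, h4⟩ := hψ
    have s0 : 0 < Real.sin (ψ / 2) :=
      Real.sin_pos_of_pos_of_lt_pi (by linarith) (by linarith)
    have c0 : 0 < Real.cos (ψ / 2) :=
      Real.cos_pos_of_mem_Ioo ⟨by linarith, by linarith⟩
    simp only [mem_ofPred_eq, Ne, ENNReal.ofReal_eq_zero, not_le]
    positivity
  intro h
  have h0 := measure_mono_null hsub h
  rw [Measure.restrict_apply hm] at h0
  have ho : IsOpen (jacobiBall θ r ∩ Ioo 0 π) := (isOpen_Ioo.inter isOpen_Ioo).inter isOpen_Ioo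
  have hne : (jacobiBall θ r ∩ Ioo 0 π).Nonempty :=
    ⟨θ, ⟨⟨by linarith, by linarith⟩, hθ⟩, hθ⟩
  exact (ho.measure_pos volume hne).ne' h0

theorem quad_aux (x y r δ : ℝ) (hx : 0 < x) (hy : 0 < y) (hr : 0 < r) (hrδ : r ^ 2 ≤ 20 * δ)
    (hxy : x ≤ y + r / 2) : (x + r) ^ 2 ≤ 80 * (x * y + δ) := by
  rcases le_total r x with h | h
  · have h1 : x / 2 ≤ y := by linarith
    have h2 : x * (x / 2) ≤ x * y := mul_le_mul_of_nonneg_left h1 hx.le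
    nlinarith [sq_nonneg r]
  · have := mul_pos hx hy
    nlinarith

theorem pow_aux (p z w : ℝ) (hp : -(1 / 2) ≤ p) (hz : 0 < z) (hw : 0 < w) (h : z ^ 2 ≤ 80 * w) :
    w ^ (-(p + 1 / 2)) * z ^ (2 * p + 1) ≤ 80 ^ (p + 1 / 2) := by
  have e : z ^ (2 * p + 1) = (z ^ 2) ^ (p + 1 / 2) := by
    rw [← Real.rpow_natCast, ← Real.rpow_mul hz.le]; congr 1; push_cast; ring
  rw [e]
  have h1 : (z ^ 2) ^ (p + 1 / 2) ≤ (80 * w) ^ (p + 1 / 2) :=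
    Real.rpow_le_rpow (by positivity) h (by linarith)
  rw [Real.mul_rpow (by norm_num) hw.le] at h1
  calc _ ≤ w ^ (-(p + 1 / 2)) * (80 ^ (p + 1 / 2) * w ^ (p + 1 / 2)) :=
        mul_le_mul_of_nonneg_left h1 (by positivity)
    _ = 80 ^ (p + 1 / 2) * (w ^ (-(p + 1 / 2)) * w ^ (p + 1 / 2)) := by ring
    _ = _ := by rw [← Real.rpow_add hw]; simp

/-- growth estimate for the symmetrized kernel `H̃_t^{α,β}`. -/
theorem Htilde_growth (α β : ℝ) (hα : -(1 / 2) ≤ α) (hβ : -(1 / 2) ≤ β) :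
    ∃ C : ℝ, 0 < C ∧
      ∀ θ ∈ Ioo (0 : ℝ) π, ∀ φ ∈ Ioo (0 : ℝ) π, θ ≠ φ →
        ∀ t : ℝ, 0 < t →
          Htilde α β t θ φ
            ≤ C / (jacobiMeasure α β (jacobiBall θ |θ - φ|)).toReal := by
  obtain ⟨C0, hC0, H⟩ := pi_two_dim α β hα hβ
  set A : ℝ := (2 : ℝ) ^ (-((α + 1) + (β + 1) + 2)) /
    (jacobiMeasure (α + 1) (β + 1) (Ioo 0 π)).toReal with hA
  have hA0 : 0 ≤ A := by positivity
  refine ⟨A * C0 * 2 * (80 ^ (α + 1 / 2) * 80 ^ (β + 1 / 2)) * 10 + 1, by positivity, ?_⟩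
  intro θ hθ φ hφ hne t ht
  obtain ⟨hθ0, hθπ⟩ := hθ
  obtain ⟨hφ0, hφπ⟩ := hφ
  set r := |θ - φ| with hr
  have hr0 : 0 < r := abs_pos.2 (sub_ne_zero.2 hne)
  have hpi := Real.pi_pos
  have sx : 0 < Real.sin (θ / 2) := Real.sin_pos_of_pos_of_lt_pi (by linarith) (by linarith)
  have cx : 0 < Real.cos (θ / 2) := Real.cos_pos_of_mem_Ioo ⟨by linarith, by linarith⟩
  have sy : 0 < Real.sin (φ / 2) := Real.sin_pos_of_pos_of_lt_pi (by linarith) (by linarith)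
  have cy : 0 < Real.cos (φ / 2) := Real.cos_pos_of_mem_Ioo ⟨by linarith, by linarith⟩
  set a := Real.sin (θ / 2) * Real.sin (φ / 2) with ha
  set b := Real.cos (θ / 2) * Real.cos (φ / 2) with hb
  have ha0 : 0 < a := mul_pos sx sy
  have hb0 : 0 < b := mul_pos cx cy
  set δ := 1 - a - b with hδ
  have hcos : Real.cos (θ / 2 - φ / 2) = 1 - δ := by rw [Real.cos_sub, hδ, ha, hb]; ring
  have hrδ : r ^ 2 ≤ 20 * δ := by
    have h1 : |θ / 2 - φ / 2| ≤ π := by rw [abs_le]; constructor <;> linarith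
    have h2 := Real.cos_le_one_sub_mul_cos_sq h1
    rw [hcos] at h2
    have h3 : 2 / π ^ 2 * (θ / 2 - φ / 2) ^ 2 ≤ δ := by linarith
    have h4 : π ^ 2 ≤ 10 := by nlinarith [Real.pi_lt_d2]
    have h5 : 1 / 5 ≤ 2 / π ^ 2 := by
      rw [div_le_div_iff₀ (by norm_num) (by positivity)]; linarith
    rw [hr, sq_abs]
    nlinarith [mul_le_mul_of_nonneg_right h5 (sq_nonneg (θ / 2 - φ / 2))]
  have hδ0 : 0 < δ := by nlinarith
  have hδ1 : δ ≤ 1 := by linarith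
  have habs : |θ / 2 - φ / 2| = r / 2 := by
    rw [hr, show θ / 2 - φ / 2 = (θ - φ) / 2 by ring, abs_div, abs_two]
  have ls : Real.sin (θ / 2) ≤ Real.sin (φ / 2) + r / 2 := by
    have := (abs_le.1 ((Real.abs_sin_sub_sin_le (θ / 2) (φ / 2)).trans habs.le)).2
    linarith
  have lc : Real.cos (θ / 2) ≤ Real.cos (φ / 2) + r / 2 := by
    have := (abs_le.1 ((Real.abs_cos_sub_cos_le (θ / 2) (φ / 2)).trans habs.le)).2
    linarith
  have P1 := pow_aux α (Real.sin (θ / 2) + r) (a + δ) hα (by linarith) (by linarith)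
    (quad_aux _ _ _ _ sx sy hr0 hrδ ls)
  have P2 := pow_aux β (Real.cos (θ / 2) + r) (b + δ) hβ (by linarith) (by linarith)
    (quad_aux _ _ _ _ cx cy hr0 hrδ lc)
  have P3 : δ ^ (-(1 / 2) : ℝ) * (2 * r) ≤ 10 := by
    rw [Real.rpow_neg hδ0.le, ← Real.sqrt_eq_rpow, inv_mul_le_iff₀ (Real.sqrt_pos.2 hδ0)]
    have : r ≤ Real.sqrt δ * 5 := by
      refine le_of_sq_le_sq ?_ (by positivity)
      rw [mul_pow, Real.sq_sqrt hδ0.le]; linarith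
    linarith
  have hμle := ball_measure_le α β θ r hα hβ ⟨hθ0, hθπ⟩ hr0
  have hμ0 := ball_measure_pos α β θ r ⟨hθ0, hθπ⟩ hr0
  have hμtop : jacobiMeasure α β (jacobiBall θ r) ≠ ⊤ := ne_top_of_le_ne_top ENNReal.ofReal_ne_top hμle
  have hμR := ENNReal.toReal_le_of_le_ofReal (by positivity) hμle
  have hμpos := ENNReal.toReal_pos hμ0 hμtop
  generalize (jacobiMeasure α β (jacobiBall θ r)).toReal = μ at hμR hμpos ⊢
  rw [le_div_iff₀ hμpos]
  set D := Real.cosh (t / 2) - 1 + δ with hD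
  have hDδ : δ ≤ D := by linarith [Real.one_le_cosh (t / 2)]
  have hD0 : 0 < D := by linarith
  have hS : 0 ≤ Real.sinh (t / 2) := Real.sinh_nonneg_iff.2 (by linarith)
  have HH := H a b D ha0 hb0 hD0
  have hsθ : Real.sin θ = 2 * Real.sin (θ / 2) * Real.cos (θ / 2) := by
    rw [← Real.sin_two_mul]; congr 1; ring
  have hsφ : Real.sin φ = 2 * Real.sin (φ / 2) * Real.cos (φ / 2) := by
    rw [← Real.sin_two_mul]; congr 1; ring
  have hHt : Htilde α β t θ φ = A * Real.sinh (t / 2) *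
      (a * b * ∫ u, ∫ v, 1 / (D + a * (1 - u) + b * (1 - v)) ^ (α + β + 4)
        ∂(PiMeasure (β + 1)) ∂(PiMeasure (α + 1))) := by
    have hi : (∫ u, ∫ v, 1 / (Real.cosh (t / 2) - 1 + qfun θ φ u v) ^ (α + 1 + (β + 1) + 2)
        ∂(PiMeasure (β + 1)) ∂(PiMeasure (α + 1))) =
        ∫ u, ∫ v, 1 / (D + a * (1 - u) + b * (1 - v)) ^ (α + β + 4)
        ∂(PiMeasure (β + 1)) ∂(PiMeasure (α + 1)) := by
      have e1 : α + 1 + (β + 1) + 2 = α + β + 4 := by ring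
      have e2 : ∀ u v, Real.cosh (t / 2) - 1 + qfun θ φ u v =
          D + a * (1 - u) + b * (1 - v) := by
        intro u v
        simp only [qfun, hD, hδ, ha, hb]; ring
      simp only [e1, e2]
    unfold Htilde Hker
    rw [hi, ← hA, hsθ, hsφ, ha, hb]
    ring
  rw [hHt]
  have SB := sinh_bound t δ ht hδ0 hδ1
  rw [← hD] at SB
  have haδ : 0 < a + δ := by linarith
  have hbδ : 0 < b + δ := by linarith
  have haD : 0 < a + D := by linarith
  have hbD : 0 < b + D := by linarith
  have m1 : (a + D) ^ (-(α + 1 / 2)) ≤ (a + δ) ^ (-(α + 1 / 2)) :=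
    Real.rpow_le_rpow_of_nonpos haδ (by linarith) (by linarith)
  have m2 : (b + D) ^ (-(β + 1 / 2)) ≤ (b + δ) ^ (-(β + 1 / 2)) :=
    Real.rpow_le_rpow_of_nonpos hbδ (by linarith) (by linarith)
  have m3 := mul_le_mul m1 m2 (by positivity) (by positivity)
  calc _ ≤ A * Real.sinh (t / 2) *
        (C0 * ((a + D) ^ (-(α + 1 / 2)) * (b + D) ^ (-(β + 1 / 2)) * D⁻¹)) * μ := by gcongr
    _ = A * C0 * ((a + D) ^ (-(α + 1 / 2)) * (b + D) ^ (-(β + 1 / 2))) *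
        (Real.sinh (t / 2) * D⁻¹) * μ := by ring
    _ ≤ A * C0 * ((a + δ) ^ (-(α + 1 / 2)) * (b + δ) ^ (-(β + 1 / 2))) *
        (2 * δ ^ (-(1 / 2) : ℝ)) * (((Real.sin (θ / 2) + r) ^ (2 * α + 1) *
          (Real.cos (θ / 2) + r) ^ (2 * β + 1)) * (2 * r)) := by gcongr
    _ = A * C0 * 2 * (((a + δ) ^ (-(α + 1 / 2)) * (Real.sin (θ / 2) + r) ^ (2 * α + 1)) *
        ((b + δ) ^ (-(β + 1 / 2)) * (Real.cos (θ / 2) + r) ^ (2 * β + 1))) *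
        (δ ^ (-(1 / 2) : ℝ) * (2 * r)) := by ring
    _ ≤ A * C0 * 2 * (80 ^ (α + 1 / 2) * 80 ^ (β + 1 / 2)) * 10 := by gcongr
    _ ≤ _ := by linarith
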